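/- Let t ≥ 3 and let a_1 > a_2 > ⋯ > a_t be positive integers such that the numbers 2^{a_1}+1, …, 2^{a_t}+1 are pairwise coprime, and let b be a positive integer with gcd(2^b + 1, 2^{a_1} + 1) = 1. Then there exists a rational number x with odd denominator such that V(2; a_1, …, a_t; x) + V(−(2^b + 1)·x) − V(−x) < −1/2. -/

import Mathlib

/-- `IsV2 V` says that `V : ℚ → ℚ` is the Kubert `V`-function in characteristic 2:
for any rational `x` (with odd denominator), any `k ≥ 1` and any integer `a` with
`0 ≤ a < 2^k - 1` such that `x - a/(2^k - 1)` is an integer, `V x` equals the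
binary digit sum of `a` divided by `k`. -/
def IsV2 (V : ℚ → ℚ) : Prop :=
  ∀ (x : ℚ) (k a : ℕ), 0 < k → a < 2 ^ k - 1 →
    (∃ z : ℤ, x - (a : ℚ) / ((2 : ℚ) ^ k - 1) = (z : ℚ)) →
    V x = ((Nat.digits 2 a).sum : ℚ) / (k : ℚ)

/-- `Vmulti V r x = V(2; r₁, …, r_t; x) = ∑_{S ⊆ {1,…,t}} (-1)^{t - |S|} V((∏_{j ∈ S} (2^{r_j}+1)) x)`. -/
def Vmulti (V : ℚ → ℚ) {t : ℕ} (r : Fin t → ℕ) (x : ℚ) : ℚ :=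
  ∑ S : Finset (Fin t), (-1 : ℚ) ^ (t - S.card) * V ((∏ j ∈ S, ((2 : ℚ) ^ (r j) + 1)) * x)


def IsI (x : ℚ) : Prop := ∃ z : ℤ, x = (z : ℚ)

lemma IsI.add {x y : ℚ} (hx : IsI x) (hy : IsI y) : IsI (x + y) := by
  obtain ⟨a, rfl⟩ := hx; obtain ⟨b, rfl⟩ := hy; exact ⟨a + b, by push_cast; ring⟩
lemma IsI.sub {x y : ℚ} (hx : IsI x) (hy : IsI y) : IsI (x - y) := by
  obtain ⟨a, rfl⟩ := hx; obtain ⟨b, rfl⟩ := hy; exact ⟨a - b, by push_cast; ring⟩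
lemma IsI.neg {x : ℚ} (hx : IsI x) : IsI (-x) := by
  obtain ⟨a, rfl⟩ := hx; exact ⟨-a, by push_cast; ring⟩
lemma IsI.mul {x y : ℚ} (hx : IsI x) (hy : IsI y) : IsI (x * y) := by
  obtain ⟨a, rfl⟩ := hx; obtain ⟨b, rfl⟩ := hy; exact ⟨a * b, by push_cast; ring⟩
lemma IsI.int (z : ℤ) : IsI (z : ℚ) := ⟨z, rfl⟩
lemma IsI.nat (z : ℕ) : IsI (z : ℚ) := ⟨z, by simp⟩
lemma IsI.pow2 (n : ℕ) : IsI ((2 : ℚ) ^ n) := ⟨2 ^ n, by simp⟩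
lemma IsI.one : IsI (1 : ℚ) := ⟨1, by simp⟩

def Per (k : ℕ) (x : ℚ) : Prop := IsI (((2 : ℚ) ^ k - 1) * x)

lemma Per.mulI {k : ℕ} {x y : ℚ} (h : Per k x) (hy : IsI y) : Per k (y * x) := by
  unfold Per at *
  have := hy.mul h
  convert this using 1; ring
lemma Per.add {k : ℕ} {x y : ℚ} (h : Per k x) (hy : Per k y) : Per k (x + y) := by
  unfold Per at *
  have := h.add hy
  convert this using 1; ring
lemma Per.neg {k : ℕ} {x : ℚ} (h : Per k x) : Per k (-x) := by
  unfold Per at *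
  have := h.neg
  convert this using 1; ring
lemma Per.ofI {k : ℕ} {x : ℚ} (h : IsI x) : Per k x :=
  ((IsI.pow2 k).sub IsI.one).mul h

lemma Per.dvd {k n : ℕ} {x : ℚ} (h : Per k x) (hd : k ∣ n) : Per n x := by
  obtain ⟨m, rfl⟩ := hd
  have h1 : ((2 : ℤ) ^ k - 1) ∣ (2 : ℤ) ^ (k * m) - 1 := by
    rw [pow_mul]; simpa using sub_dvd_pow_sub_pow ((2 : ℤ) ^ k) 1 m
  obtain ⟨w, hw⟩ := h1
  have hw' : ((2 : ℚ) ^ (k * m) - 1) = ((2 : ℚ) ^ k - 1) * w := by exact_mod_cast hw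
  unfold Per at *
  rw [hw']
  have := (IsI.int w).mul h
  convert this using 1; ring

lemma Per.mulpow {k : ℕ} {x : ℚ} (h : Per k x) : Per k (2 * x) :=
  h.mulI ⟨2, by simp⟩

lemma two_pow_pos_aux (k : ℕ) (hk : 0 < k) : (0 : ℚ) < (2 : ℚ) ^ k - 1 := by
  have : (1 : ℚ) < 2 ^ k := one_lt_pow₀ (by norm_num) (by omega)
  linarith

lemma Per.oddden {k : ℕ} (hk : 0 < k) {x : ℚ} (h : Per k x) : Odd x.den := by
  obtain ⟨z, hz⟩ := h
  have hp := two_pow_pos_aux k hk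
  have hx : x = Rat.divInt z (2 ^ k - 1) := by
    rw [Rat.divInt_eq_div]; push_cast; field_simp; linarith
  have hd : (x.den : ℤ) ∣ 2 ^ k - 1 := by
    rw [hx]; exact Rat.den_dvd _ _
  have hodd : Odd ((2 : ℤ) ^ k - 1) := by
    have : Even ((2 : ℤ) ^ k) := by
      rw [Int.even_pow]; exact ⟨even_two, by omega⟩
    exact this.sub_odd odd_one
  obtain ⟨w, hw⟩ := hd
  rw [hw, Int.odd_mul] at hodd
  exact_mod_cast hodd.1

lemma digsum_aux (n : ℕ) : ((Nat.digits 2 n).sum) = n % 2 + (Nat.digits 2 (n / 2)).sum := by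
  rcases Nat.eq_zero_or_pos n with rfl | h
  · simp
  · rw [Nat.digits_def' (by norm_num) h]; simp

lemma nfloor_eq (y : ℚ) (hy : 0 ≤ y) : ((⌊y⌋₊ : ℕ) : ℚ) = y - Int.fract y := by
  have h1 := natCast_floor_eq_intCast_floor (R := ℚ) hy
  rw [h1]; have := Int.floor_add_fract y; linarith

lemma digit_lem (y : ℚ) (hy : 0 ≤ y) (hy1 : y < 1) (k : ℕ) :
    (((Nat.digits 2 ⌊2 ^ k * y⌋₊).sum : ℕ) : ℚ) =
      ∑ i ∈ Finset.range k, (2 * Int.fract (2 ^ i * y) - Int.fract (2 ^ (i + 1) * y)) := by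
  induction k with
  | zero =>
    have : ⌊y⌋₊ = 0 := Nat.floor_eq_zero.mpr hy1
    simp [this]
  | succ k ih =>
    rw [Finset.sum_range_succ, ← ih, digsum_aux]
    have h2 : ⌊2 ^ (k + 1) * y⌋₊ / 2 = ⌊2 ^ k * y⌋₊ := by
      rw [← Nat.floor_div_ofNat]; congr 1; rw [pow_succ]; ring
    rw [h2]
    have h3 : ⌊2 ^ (k + 1) * y⌋₊ % 2 + 2 * ⌊2 ^ k * y⌋₊ = ⌊2 ^ (k + 1) * y⌋₊ := by
      rw [← h2]; exact Nat.mod_add_div _ _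
    have h4 : ((⌊2 ^ (k + 1) * y⌋₊ % 2 : ℕ) : ℚ) + 2 * (⌊2 ^ k * y⌋₊ : ℕ) = (⌊2 ^ (k + 1) * y⌋₊ : ℕ) := by
      exact_mod_cast h3
    rw [nfloor_eq _ (by positivity), nfloor_eq _ (by positivity)] at h4
    rw [Nat.cast_add]
    have : (2 : ℚ) ^ (k + 1) * y = 2 * (2 ^ k * y) := by ring
    linarith

lemma fract_congr {x y : ℚ} (h : IsI (x - y)) : Int.fract x = Int.fract y := by
  obtain ⟨z, hz⟩ := h
  rw [Int.fract_eq_fract]; exact ⟨z, hz⟩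

section
variable {V : ℚ → ℚ}

lemma V_formula (hV : IsV2 V) {k : ℕ} (hk : 0 < k) {x : ℚ} (h : Per k x) :
    V x * k = ∑ i ∈ Finset.range k, Int.fract (2 ^ i * x) := by
  have hp := two_pow_pos_aux k hk
  have hI : IsI (x - Int.fract x) := ⟨⌊x⌋, by have := Int.floor_add_fract x; linarith⟩
  set y := Int.fract x with hy
  have hy0 : 0 ≤ y := Int.fract_nonneg x
  have hy1 : y < 1 := Int.fract_lt_one x
  have hf : ∀ i : ℕ, Int.fract (2 ^ i * x) = Int.fract (2 ^ i * y) := by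
    intro i; apply fract_congr; rw [← mul_sub]; exact (IsI.pow2 i).mul hI
  have hyI : IsI ((2 ^ k - 1) * y) := by
    have h1 : IsI ((2 ^ k - 1) * (x - y)) := Per.ofI (k := k) hI
    have := IsI.sub h h1
    convert this using 1; ring
  obtain ⟨z, hz⟩ := hyI
  have hz0 : 0 ≤ z := by
    have : (0 : ℚ) ≤ z := by rw [← hz]; positivity
    exact_mod_cast this
  obtain ⟨a, rfl⟩ := Int.eq_ofNat_of_zero_le hz0
  have hz' : (2 ^ k - 1) * y = (a : ℚ) := by rw [hz]; simp
  have ha : a < 2 ^ k - 1 := by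
    have : (a : ℚ) < 2 ^ k - 1 := by rw [← hz']; nlinarith
    have h2 : (a : ℚ) + 1 < 2 ^ k := by linarith
    have h3 : a + 1 < 2 ^ k := by exact_mod_cast h2
    omega
  have hya : y = (a : ℚ) / (2 ^ k - 1) := by field_simp; linarith
  have hVx := hV x k a hk ha (by rw [← hya]; exact hI)
  have hfl : ⌊2 ^ k * y⌋₊ = a := by
    have : 2 ^ k * y = a + y := by linarith
    rw [this, Nat.floor_eq_iff (by positivity)]
    constructor <;> linarith
  have hd := digit_lem y hy0 hy1 k
  rw [hfl] at hd
  rw [hVx, hd, Finset.sum_congr rfl (fun i _ => hf i)]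
  have hk' : (k : ℚ) ≠ 0 := by positivity
  rw [div_mul_cancel₀ _ hk']
  have hs := Finset.sum_range_succ (fun i => Int.fract (2 ^ i * y)) k
  rw [Finset.sum_range_succ'] at hs
  have hk0 : Int.fract (2 ^ k * y) = Int.fract (2 ^ 0 * y) := by
    apply fract_congr; refine ⟨a, ?_⟩; simp; linarith
  rw [Finset.sum_sub_distrib, ← Finset.mul_sum]
  linarith

lemma V_congr (hV : IsV2 V) {k : ℕ} (hk : 0 < k) {x y : ℚ} (h : Per k y) (hI : IsI (x - y)) :
    V x = V y := by
  have hx : Per k x := by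
    have := Per.add h (Per.ofI (k := k) hI)
    convert this using 1; ring
  have h1 := V_formula hV hk h
  have h2 := V_formula hV hk hx
  have hf : ∀ i : ℕ, Int.fract (2 ^ i * x) = Int.fract (2 ^ i * y) := by
    intro i; apply fract_congr; rw [← mul_sub]; exact (IsI.pow2 i).mul hI
  rw [Finset.sum_congr rfl (fun i _ => hf i), ← h1] at h2
  have hk' : (k : ℚ) ≠ 0 := by positivity
  exact mul_right_cancel₀ hk' h2

lemma V_two (hV : IsV2 V) {k : ℕ} (hk : 0 < k) {x : ℚ} (h : Per k x) : V (2 * x) = V x := by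
  have h1 := V_formula hV hk h
  have h2 := V_formula hV hk h.mulpow
  have hk' : (k : ℚ) ≠ 0 := by positivity
  apply mul_right_cancel₀ hk'
  rw [h1, h2]
  have hs := Finset.sum_range_succ (fun i => Int.fract (2 ^ i * x)) k
  rw [Finset.sum_range_succ'] at hs
  have hk0 : Int.fract (2 ^ k * x) = Int.fract (2 ^ 0 * x) := by
    apply fract_congr; unfold Per at h; convert h using 1; ring
  have : ∀ i : ℕ, (2 : ℚ) ^ i * (2 * x) = 2 ^ (i + 1) * x := by intro i; ring
  simp only [this]
  linarith

lemma V_pow (hV : IsV2 V) {k : ℕ} (hk : 0 < k) {x : ℚ} (h : Per k x) (m : ℕ) :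
    V (2 ^ m * x) = V x := by
  induction m with
  | zero => simp
  | succ m ih =>
    rw [← ih, ← V_two hV hk (h.mulI (IsI.pow2 m))]; congr 1; ring

lemma V_int (hV : IsV2 V) {x : ℚ} (h : IsI x) : V x = 0 := by
  have h2 := V_formula hV (k := 1) one_pos (Per.ofI h)
  obtain ⟨z, rfl⟩ := h
  simpa using h2

lemma notI_pow {k : ℕ} (hk : 0 < k) {x : ℚ} (h : Per k x) (hx : ¬ IsI x) (i : ℕ) : ¬ IsI (2 ^ i * x) := by
  intro hi
  apply hx
  have h1 : Per (k * i) x := h.dvd (dvd_mul_right _ _)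
  have h2 : IsI (2 ^ (k * i) * x) := by
    have h3 : IsI (2 ^ (k * i - i) * (2 ^ i * x)) := (IsI.pow2 _).mul hi
    rw [← mul_assoc, ← pow_add] at h3
    have : k * i - i + i = k * i := Nat.sub_add_cancel (Nat.le_mul_of_pos_left i hk)
    rwa [this] at h3
  have := h2.sub h1
  convert this using 1; ring

lemma V_neg (hV : IsV2 V) {k : ℕ} (hk : 0 < k) {x : ℚ} (h : Per k x) (hx : ¬ IsI x) :
    V (-x) = 1 - V x := by
  have h1 := V_formula hV hk h
  have h2 := V_formula hV hk h.neg
  have hk' : (k : ℚ) ≠ 0 := by positivity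
  have hf : ∀ i : ℕ, Int.fract (2 ^ i * -x) = 1 - Int.fract (2 ^ i * x) := by
    intro i
    rw [mul_neg, Int.fract_neg]
    intro h0
    apply notI_pow hk h hx i
    exact ⟨⌊2 ^ i * x⌋, by have := Int.floor_add_fract (2 ^ i * x); linarith⟩
  rw [Finset.sum_congr rfl (fun i _ => hf i), Finset.sum_sub_distrib, ← h1] at h2
  apply mul_right_cancel₀ hk'
  rw [h2]; simp; ring

lemma V_half (hV : IsV2 V) {m : ℕ} (hm : 0 < m) {x : ℚ} (h : IsI ((2 ^ m + 1) * x)) (hx : ¬ IsI x) :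
    V x = 1 / 2 := by
  have hp : Per (m + m) x := by
    have := ((IsI.pow2 m).sub IsI.one).mul h
    unfold Per; convert this using 1; ring
  have h1 := V_pow hV (by omega) hp m
  have h2 := V_neg hV (by omega) hp hx
  have h3 := V_congr hV (by omega) hp.neg (x := 2 ^ m * x) (by convert h using 1; ring)
  linarith

lemma hermite (F : ℕ) (hF : 0 < F) (w : ℚ) :
    ∑ c ∈ Finset.range F, Int.fract (w + c / F) = Int.fract (F * w) + ((F : ℚ) - 1) / 2 := by
  have hF' : (F : ℚ) ≠ 0 := by positivity
  have hFp : (0 : ℚ) < F := by positivity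
  have step : ∀ w : ℚ, ∑ c ∈ Finset.range F, Int.fract (w + 1 / F + c / F) =
      ∑ c ∈ Finset.range F, Int.fract (w + c / F) := by
    intro w
    have hs := Finset.sum_range_succ (fun c : ℕ => Int.fract (w + c / F)) F
    rw [Finset.sum_range_succ'] at hs
    have h0 : Int.fract (w + (F : ℕ) / F) = Int.fract (w + (0 : ℕ) / F) := by
      apply fract_congr; refine ⟨1, ?_⟩; rw [div_self hF']; simp
    have : ∀ c : ℕ, w + 1 / (F : ℚ) + c / F = w + ((c + 1 : ℕ) : ℚ) / F := by
      intro c; push_cast; ring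
    simp only [this]
    linarith
  have base : ∀ w : ℚ, 0 ≤ w → w < 1 / F → 
    ∑ c ∈ Finset.range F, Int.fract (w + c / F) = Int.fract (F * w) + ((F : ℚ) - 1) / 2 := by
    intro w h0 h1
    have h1' : F * w < 1 := by rw [lt_div_iff₀ hFp] at h1; linarith
    have e1 : Int.fract (F * w) = F * w := Int.fract_eq_self.mpr ⟨by positivity, h1'⟩
    have e2 : ∀ c ∈ Finset.range F, Int.fract (w + c / F) = w + c / F := by
      intro c hc
      rw [Finset.mem_range] at hc
      have hc' : (c : ℚ) + 1 ≤ F := by exact_mod_cast hc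
      refine Int.fract_eq_self.mpr ⟨by positivity, ?_⟩
      calc w + c / F < 1 / F + c / F := by linarith
        _ = (c + 1) / F := by ring
        _ ≤ 1 := by rw [div_le_one hFp]; exact hc'
    rw [Finset.sum_congr rfl e2, e1, Finset.sum_add_distrib, ← Finset.sum_div]
    have g : (∑ i ∈ Finset.range F, (i : ℚ)) = F * (F - 1) / 2 := by
      clear * -
      induction F with
      | zero => simp
      | succ n ih => rw [Finset.sum_range_succ, ih]; push_cast; ring
    rw [g]; simp; field_simp
  have shift : ∀ (n : ℕ) (w : ℚ), ∑ c ∈ Finset.range F, Int.fract (w + n / F + c / F) =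
      ∑ c ∈ Finset.range F, Int.fract (w + c / F) := by
    intro n
    induction n with
    | zero => intro w; simp
    | succ n ih =>
      intro w
      rw [← ih w, ← step (w + n / F)]; congr 1; ext c; congr 1; push_cast; ring
  have shiftz : ∀ (n : ℤ) (w : ℚ), ∑ c ∈ Finset.range F, Int.fract (w + n / F + c / F) =
      ∑ c ∈ Finset.range F, Int.fract (w + c / F) := by
    intro n w
    rcases Int.eq_nat_or_neg n with ⟨m, rfl | rfl⟩
    · exact_mod_cast shift m w
    · rw [← shift m]; congr 1; ext c; congr 1; push_cast; ring
  have key := base (Int.fract (F * w) / F) (div_nonneg (Int.fract_nonneg _) hFp.le)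
    (by gcongr; exact Int.fract_lt_one _)
  rw [← shiftz ⌊F * w⌋] at key
  have e : Int.fract (F * w) / F + ⌊F * w⌋ / F = w := by
    rw [← add_div, Int.fract_add_floor]; field_simp
  rw [e] at key
  rw [key]; congr 1
  rw [mul_div_cancel₀ _ hF', Int.fract_fract]

lemma reindex (F : ℕ) (hF : 0 < F) (u : ℤ) (hu : IsCoprime u (F : ℤ)) (w : ℚ) :
    ∑ c ∈ Finset.range F, Int.fract (w + u * c / F) = ∑ c ∈ Finset.range F, Int.fract (w + c / F) := by
  have : NeZero F := ⟨by omega⟩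
  have hF' : (F : ℚ) ≠ 0 := by positivity
  have key : ∀ f : ℕ → ℚ, ∑ c ∈ Finset.range F, f c = ∑ c : ZMod F, f c.val := by
    intro f
    symm
    apply Finset.sum_bij (fun (c : ZMod F) _ => c.val)
    · intro c _; exact Finset.mem_range.mpr (ZMod.val_lt c)
    · intro a _ b _ h; exact ZMod.val_injective F h
    · intro b hb; exact ⟨(b : ZMod F), Finset.mem_univ _, ZMod.val_cast_of_lt (Finset.mem_range.mp hb)⟩
    · intro c _; rfl
  rw [key, key]
  have hun : IsUnit (u : ZMod F) := by
    obtain ⟨p, r, h⟩ := hu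
    have := congrArg (Int.cast : ℤ → ZMod F) h
    push_cast at this
    simp at this
    exact IsUnit.of_mul_eq_one_right _ this
  obtain ⟨uu, huu⟩ := hun
  apply Fintype.sum_equiv (Units.mulLeft uu)
  intro c
  apply fract_congr
  have hz : ((u * c.val - ((uu : ZMod F) * c).val : ℤ) : ZMod F) = 0 := by
    push_cast; rw [huu]; simp
  rw [ZMod.intCast_zmod_eq_zero_iff_dvd] at hz
  obtain ⟨z, hz⟩ := hz
  refine ⟨z, ?_⟩
  have hz' : (u : ℚ) * (c.val : ℚ) - (((uu : ZMod F) * c).val : ℚ) = F * z := by exact_mod_cast hz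
  simp only [Units.mulLeft_apply]
  field_simp
  linarith

lemma distrib (hV : IsV2 V) {k : ℕ} (hk : 0 < k) (F : ℕ) (hF : 0 < F) (u : ℤ)
    (hu : IsCoprime u (F : ℤ)) (hF2 : IsCoprime (2 : ℤ) (F : ℤ)) (z : ℚ) (hz : Per k z)
    (hkF : Per k (1 / F)) :
    ∑ c ∈ Finset.range F, V (z + u * c / F) = V (F * z) + ((F : ℚ) - 1) / 2 := by
  have hk' : (k : ℚ) ≠ 0 := by positivity
  apply mul_right_cancel₀ hk'
  rw [Finset.sum_mul, add_mul, V_formula hV hk (hz.mulI (IsI.nat F))]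
  have h1 : ∀ c ∈ Finset.range F, V (z + u * c / F) * k =
      ∑ i ∈ Finset.range k, Int.fract (2 ^ i * (z + u * c / F)) := by
    intro c _
    apply V_formula hV hk
    apply hz.add
    have := hkF.mulI ((IsI.int u).mul (IsI.nat c))
    convert this using 1; ring
  rw [Finset.sum_congr rfl h1, Finset.sum_comm]
  have h2 : ∀ i ∈ Finset.range k, ∑ c ∈ Finset.range F, Int.fract (2 ^ i * (z + u * c / F)) =
      Int.fract (2 ^ i * (F * z)) + ((F : ℚ) - 1) / 2 := by
    intro i _
    have e := reindex F hF (2 ^ i * u) ((hF2.pow_left).mul_left hu) (2 ^ i * z)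
    rw [hermite F hF] at e
    rw [show (2 : ℚ) ^ i * (F * z) = F * (2 ^ i * z) by ring, ← e]
    congr 1; ext c; congr 1; push_cast; ring
  rw [Finset.sum_congr rfl h2, Finset.sum_add_distrib]
  simp; ring
end

def Fm (n : ℕ) : ℕ := 2 ^ (2 ^ n) + 1

lemma Fm_cast (n : ℕ) : ((Fm n : ℕ) : ℚ) = 2 ^ (2 ^ n) + 1 := by simp [Fm]

lemma Fm_pos (n : ℕ) : 0 < Fm n := by simp [Fm]

lemma Fm_gt (n : ℕ) : 2 < Fm n := by
  have : 2 ^ 1 ≤ 2 ^ (2 ^ n) := Nat.pow_le_pow_right (by norm_num) Nat.one_le_two_pow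
  unfold Fm; omega

lemma Fm_cop2 (n : ℕ) : IsCoprime (2 : ℤ) (Fm n : ℤ) := by
  refine ⟨-2 ^ (2 ^ n - 1), 1, ?_⟩
  have h : (2 : ℤ) ^ (2 ^ n) = 2 ^ (2 ^ n - 1) * 2 := by
    rw [← pow_succ, Nat.sub_add_cancel Nat.one_le_two_pow]
  simp only [Fm]; push_cast; rw [h]; ring

lemma perF_self (n : ℕ) : Per (2 ^ (n + 1)) (1 / (Fm n : ℚ)) := by
  refine ⟨2 ^ (2 ^ n) - 1, ?_⟩
  have h0 : ((2 : ℚ) ^ (2 ^ n) + 1) ≠ 0 := by positivity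
  rw [Fm_cast]; push_cast
  rw [pow_succ, pow_mul]; field_simp; ring

lemma perF {l n : ℕ} (h : l < n) : Per (2 ^ n) (1 / (Fm l : ℚ)) :=
  (perF_self l).dvd (pow_dvd_pow 2 h)

lemma perMono {l n : ℕ} (h : l ≤ n) {x : ℚ} (hx : Per (2 ^ l) x) : Per (2 ^ n) x :=
  hx.dvd (pow_dvd_pow 2 h)

lemma not_I_div {F : ℕ} (hF : 2 < F) {u : ℤ} (h : IsCoprime u (F : ℤ)) : ¬ IsI ((u : ℚ) / F) := by
  rintro ⟨z, hz⟩
  have hF' : (F : ℚ) ≠ 0 := by positivity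
  have h1 : (u : ℚ) = z * F := by field_simp at hz; linarith
  have h2 : u = z * F := by exact_mod_cast h1
  have h3 : IsUnit (F : ℤ) := h.isUnit_of_dvd' ⟨z, by rw [h2]; ring⟩ dvd_rfl
  rw [Int.isUnit_iff] at h3
  omega

section
variable {V : ℚ → ℚ}

lemma avg (hV : IsV2 V) {k : ℕ} (hk : 0 < k) (n : ℕ) (u : ℤ)
    (hu : IsCoprime u (Fm n : ℤ)) (z : ℚ) (hz : Per k z)
    (hkF : Per k (1 / (Fm n : ℚ))) (hzz : V (Fm n * z) = V z) :
    ∑ c ∈ Finset.range (2 ^ 2 ^ n), V (z + u * (c + 1) / Fm n) = (2 : ℚ) ^ (2 ^ n) / 2 := by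
  have h := distrib hV hk (Fm n) (Fm_pos n) u hu (Fm_cop2 n) z hz hkF
  rw [hzz] at h
  conv at h => lhs; rw [Fm]
  rw [Finset.sum_range_succ'] at h
  simp only [Nat.cast_zero, mul_zero, zero_div, add_zero, Nat.cast_add, Nat.cast_one, Fm_cast] at h
  simp only [Fm_cast]
  have h2 : ((2 ^ 2 ^ n + 1 : ℕ) : ℚ) = 2 ^ 2 ^ n + 1 := by push_cast; rfl
  simp only [Fm, Nat.cast_add, Nat.cast_pow, Nat.cast_ofNat, Nat.cast_one] at h ⊢
  linarith

lemma avgPer (hV : IsV2 V) (n : ℕ) (u : ℤ)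
    (hu : IsCoprime u (Fm n : ℤ)) (z : ℚ) (hz : Per (2 ^ n) z) :
    ∑ c ∈ Finset.range (2 ^ 2 ^ n), V (z + u * (c + 1) / Fm n) = (2 : ℚ) ^ (2 ^ n) / 2 := by
  apply avg hV (k := 2 ^ (n + 1)) (by positivity) n u hu z (perMono (by omega) hz) (perF_self n)
  rw [← V_two hV (k := 2 ^ n) (by positivity) hz]
  apply V_congr hV (k := 2 ^ n) (by positivity) hz.mulpow
  unfold Per at hz
  rw [Fm_cast]; convert hz using 1; ring

lemma quarter (hV : IsV2 V) {l m : ℕ} (h : l < m) : V (1 / (Fm l * Fm m : ℚ)) < 1 / 2 := by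
  have hk : 0 < 2 ^ m := by positivity
  have hp := two_pow_pos_aux (2 ^ m) hk
  have hFl : (2 : ℚ) < Fm l := by exact_mod_cast Fm_gt l
  have hFm : (2 : ℚ) < Fm m := by exact_mod_cast Fm_gt m
  obtain ⟨z, hz⟩ := perF h
  have hzp : 0 ≤ z := by
    have : (0 : ℚ) ≤ z := by rw [← hz]; positivity
    exact_mod_cast this
  obtain ⟨Y, rfl⟩ := Int.eq_ofNat_of_zero_le hzp
  have hY : ((2 : ℚ) ^ 2 ^ m - 1) = Y * Fm l := by
    push_cast at hz; field_simp at hz; linarith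
  have hYp : (0 : ℚ) < Y := by
    by_contra hc
    have : (Y : ℚ) = 0 := le_antisymm (not_lt.mp hc) (by positivity)
    rw [this] at hY; linarith
  have hY1 : (Y : ℚ) < 2 ^ 2 ^ m - 1 := by rw [hY]; nlinarith
  have hYn : Y < 2 ^ 2 ^ m - 1 := by
    have h2 : (Y : ℚ) + 1 < 2 ^ 2 ^ m := by linarith
    have h3 : Y + 1 < 2 ^ 2 ^ m := by exact_mod_cast h2
    omega
  have h1 := hV (1 / Fm l) (2 ^ m) Y hk hYn ⟨0, by rw [hY]; field_simp; simp⟩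
  have e : (2 : ℚ) ^ 2 ^ (m + 1) - 1 = Y * Fm l * Fm m := by
    rw [← hY, Fm_cast, pow_succ 2 m, pow_mul]; ring
  have hle : 2 ^ 2 ^ m ≤ 2 ^ 2 ^ (m + 1) :=
    Nat.pow_le_pow_right (by norm_num) (Nat.pow_le_pow_right (by norm_num) (by omega))
  have h2 := hV (1 / (Fm l * Fm m)) (2 ^ (m + 1)) Y (by positivity) (by omega)
    ⟨0, by rw [e]; field_simp; simp⟩
  have h3 : V (1 / Fm l) = 1 / 2 := by
    apply V_half hV (m := 2 ^ l) (by positivity)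
    · rw [← Fm_cast]; refine ⟨1, ?_⟩; field_simp; simp
    · have := not_I_div (Fm_gt l) (u := 1) isCoprime_one_left
      simpa using this
  have h4 : V (1 / (Fm l * Fm m)) = V (1 / Fm l) / 2 := by
    rw [h1, h2]; push_cast; rw [pow_succ]; field_simp
  rw [h4, h3]; norm_num
end

def FA (V : ℚ → ℚ) {ι : Type} [DecidableEq ι] (a : ι → ℕ) (A : Finset ι) (x : ℚ) : ℚ :=
  ∑ S ∈ A.powerset, (-1 : ℚ) ^ (A.card - S.card) * V ((∏ j ∈ S, ((2 : ℚ) ^ (a j) + 1)) * x)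

section
variable {V : ℚ → ℚ} {ι : Type} [DecidableEq ι] (a : ι → ℕ)

lemma FA_empty (x : ℚ) : FA V a ∅ x = V x := by simp [FA]

lemma FA_insert {i : ι} {A : Finset ι} (h : i ∉ A) (x : ℚ) :
    FA V a (insert i A) x = FA V a A ((2 ^ a i + 1) * x) - FA V a A x := by
  unfold FA
  rw [Finset.sum_powerset_insert h, add_comm, sub_eq_add_neg, ← Finset.sum_neg_distrib]
  congr 1
  · apply Finset.sum_congr rfl
    intro S hS
    have hiS : i ∉ S := fun hh => h (Finset.mem_powerset.mp hS hh)
    rw [Finset.card_insert_of_notMem h, Finset.card_insert_of_notMem hiS,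
      Finset.prod_insert hiS, Nat.add_sub_add_right]
    congr 2; ring
  · apply Finset.sum_congr rfl
    intro S hS
    have := Finset.card_le_card (Finset.mem_powerset.mp hS)
    rw [Finset.card_insert_of_notMem h, Nat.sub_add_comm this, pow_succ]
    ring

lemma FA_one {A : Finset ι} (h : A.Nonempty) : FA (fun _ => 1) a A 0 = 0 := by
  obtain ⟨i, hi⟩ := h
  rw [← Finset.insert_erase hi, FA_insert a (Finset.notMem_erase i A)]
  simp

lemma prodI (S : Finset ι) : IsI (∏ j ∈ S, ((2 : ℚ) ^ (a j) + 1)) :=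
  ⟨∏ j ∈ S, ((2 : ℤ) ^ (a j) + 1), by push_cast; rfl⟩

lemma avgFA (hV : IsV2 V) {A : Finset ι} (hA : A.Nonempty) (n : ℕ)
    (hc : ∀ i ∈ A, IsCoprime ((2 : ℤ) ^ a i + 1) (Fm n : ℤ)) (y : ℚ) (hy : Per (2 ^ n) y) :
    ∑ c ∈ Finset.range (2 ^ 2 ^ n), FA V a A (y + (c + 1) / Fm n) = 0 := by
  unfold FA
  rw [Finset.sum_comm]
  have h1 := FA_one a hA
  unfold FA at h1
  have h2 : ∀ S ∈ A.powerset, ∑ c ∈ Finset.range (2 ^ 2 ^ n), (-1 : ℚ) ^ (A.card - S.card) *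
      V ((∏ j ∈ S, ((2 : ℚ) ^ (a j) + 1)) * (y + (c + 1) / Fm n)) =
      (-1 : ℚ) ^ (A.card - S.card) * 1 * ((2 : ℚ) ^ (2 ^ n) / 2) := by
    intro S hS
    rw [← Finset.mul_sum, mul_one]
    congr 1
    have := avgPer hV n (∏ j ∈ S, ((2 : ℤ) ^ (a j) + 1))
      (IsCoprime.prod_left fun i hi => hc i (Finset.mem_powerset.mp hS hi))
      ((∏ j ∈ S, ((2 : ℚ) ^ (a j) + 1)) * y) (hy.mulI (prodI a S))
    rw [← this]
    congr 1; ext c; congr 1; push_cast; ring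
  rw [Finset.sum_congr rfl h2, ← Finset.sum_mul, h1, zero_mul]

lemma mul_per_two {n r : ℕ} (hr : 2 ^ n ∣ r) {y : ℚ} (hy : Per (2 ^ n) y) :
    IsI ((2 ^ r + 1) * y - 2 * y) := by
  have := hy.dvd hr
  unfold Per at this
  convert this using 1; ring

lemma kill {n r : ℕ} (hr : 2 ^ n ∣ r) (hF : Fm n ∣ 2 ^ r + 1) {y : ℚ} (hy : Per (2 ^ n) y) (c : ℕ) :
    IsI ((2 ^ r + 1) * (y + (c + 1) / Fm n) - 2 * y) := by
  obtain ⟨w, hw⟩ := hF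
  have hw' : (2 : ℚ) ^ r + 1 = Fm n * w := by exact_mod_cast hw
  have hF' : (Fm n : ℚ) ≠ 0 := by have := Fm_pos n; positivity
  have h1 := (mul_per_two hr hy).add ((IsI.nat w).mul (IsI.nat (c + 1)))
  convert h1 using 1
  have : (2 ^ r + 1) * (((c : ℚ) + 1) / Fm n) = w * (c + 1 : ℕ) := by
    rw [hw']; push_cast; field_simp
  rw [← this]; ring

lemma stepSum (hV : IsV2 V) {A : Finset ι} (hA : A.Nonempty) (n : ℕ) {i : ι} (hi : i ∉ A)
    (hr : 2 ^ n ∣ a i) (hF : Fm n ∣ 2 ^ a i + 1)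
    (hc : ∀ i ∈ A, IsCoprime ((2 : ℤ) ^ a i + 1) (Fm n : ℤ)) (y : ℚ) (hy : Per (2 ^ n) y) :
    ∑ c ∈ Finset.range (2 ^ 2 ^ n), FA V a (insert i A) (y + (c + 1) / Fm n) =
      2 ^ 2 ^ n * FA V a A y := by
  have h1 : ∀ c ∈ Finset.range (2 ^ 2 ^ n), FA V a (insert i A) (y + (c + 1) / Fm n) =
      FA V a A y - FA V a A (y + (c + 1) / Fm n) := by
    intro c _
    rw [FA_insert a hi]
    congr 1
    unfold FA
    apply Finset.sum_congr rfl
    intro S _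
    congr 1
    have hp : Per (2 ^ n) ((∏ j ∈ S, ((2 : ℚ) ^ (a j) + 1)) * y) := hy.mulI (prodI a S)
    rw [← V_two hV (k := 2 ^ n) (by positivity) hp]
    apply V_congr hV (k := 2 ^ n) (by positivity) hp.mulpow
    have := (prodI a S).mul (kill hr hF hy c)
    convert this using 1; ring
  rw [Finset.sum_congr rfl h1, Finset.sum_sub_distrib, avgFA a hV hA n hc y hy]
  simp

lemma exists_of_sum {n : ℕ} (f : ℕ → ℚ) (h : ∑ c ∈ Finset.range (2 ^ 2 ^ n), f c < 2 ^ 2 ^ n * (-(1 / 2))) :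
    ∃ c ∈ Finset.range (2 ^ 2 ^ n), f c < -(1 / 2) := by
  apply Finset.exists_lt_of_sum_lt
  simpa using h

end

lemma Fm_dvd {n m : ℕ} (hm : Odd m) : Fm n ∣ 2 ^ (2 ^ n * m) + 1 := by
  unfold Fm; rw [pow_mul]
  simpa using Odd.nat_add_dvd_pow_add_pow (2 ^ 2 ^ n) 1 hm

lemma Fm_cop {w n m : ℕ} (hm : Odd m) (hne : w ≠ n) :
    IsCoprime ((2 : ℤ) ^ (2 ^ w * m) + 1) (Fm n : ℤ) := by
  rcases lt_or_gt_of_ne hne with h | h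
  · obtain ⟨d, rfl⟩ := Nat.exists_eq_add_of_lt h
    obtain ⟨s, hs⟩ := Fm_dvd (n := w + d + 1) hm
    have hs' : (2 : ℤ) ^ (2 ^ (w + d + 1) * m) + 1 = Fm (w + d + 1) * s := by exact_mod_cast hs
    have h1 : ((2 : ℤ) ^ (2 ^ w * m) + 1) ∣ 2 ^ (2 ^ (w + d + 1) * m) - 1 := by
      have h2 : ((2 : ℤ) ^ (2 ^ w * m) - -1) ∣ ((2 : ℤ) ^ (2 ^ w * m)) ^ (2 ^ (d + 1)) - (-1) ^ (2 ^ (d + 1)) :=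
        sub_dvd_pow_sub_pow _ _ _
      have h3 : ((-1 : ℤ)) ^ (2 ^ (d + 1)) = 1 := by
        apply Even.neg_one_pow; rw [pow_succ]; exact even_two.mul_left _
      rw [h3, ← pow_mul, sub_neg_eq_add] at h2
      convert h2 using 3
      rw [show w + d + 1 = w + (d + 1) by ring, pow_add]; ring
    obtain ⟨r, hr⟩ := h1
    obtain ⟨α, β, hαβ⟩ := Fm_cop2 (w + d + 1)
    refine ⟨-α * r, α * s + β, ?_⟩
    linear_combination hαβ + α * hr - α * hs'
  · have h1 : (Fm n : ℤ) ∣ 2 ^ (2 ^ w * m) - 1 := by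
      obtain ⟨d, rfl⟩ := Nat.exists_eq_add_of_lt h
      have h2 : ((2 : ℤ) ^ (2 ^ n) - -1) ∣ ((2 : ℤ) ^ (2 ^ n)) ^ (2 ^ (d + 1) * m) - (-1) ^ (2 ^ (d + 1) * m) :=
        sub_dvd_pow_sub_pow _ _ _
      have h3 : ((-1 : ℤ)) ^ (2 ^ (d + 1) * m) = 1 := by
        apply Even.neg_one_pow; rw [pow_succ]; exact (even_two.mul_left _).mul_right _
      rw [h3, ← pow_mul, sub_neg_eq_add] at h2
      unfold Fm; push_cast
      convert h2 using 3
      rw [show n + d + 1 = n + (d + 1) by ring, pow_add]; ring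
    obtain ⟨r, hr⟩ := h1
    have : (2 : ℤ) ^ (2 ^ w * m) + 1 = 2 + Fm n * r := by rw [← hr]; ring
    rw [this]
    exact (Fm_cop2 n).add_mul_left_left r

lemma not_I_div' {n : ℕ} {u : ℤ} (h : IsCoprime u (Fm n : ℤ)) {c : ℕ} (hc : c < 2 ^ 2 ^ n) :
    ¬ IsI ((u : ℚ) * (c + 1) / Fm n) := by
  rintro ⟨z, hz⟩
  have hF' : (Fm n : ℚ) ≠ 0 := by have := Fm_pos n; positivity
  have h1 : (u : ℚ) * (c + 1) = Fm n * z := by field_simp at hz; linarith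
  have h2 : u * ((c + 1 : ℕ) : ℤ) = Fm n * z := by push_cast; exact_mod_cast h1
  have h3 : (Fm n : ℤ) ∣ ((c + 1 : ℕ) : ℤ) := h.symm.dvd_of_dvd_mul_left ⟨z, h2⟩
  have h4 : Fm n ∣ c + 1 := by exact_mod_cast h3
  have := Nat.le_of_dvd (by omega) h4
  unfold Fm at this; omega

lemma not_I_congr {x y : ℚ} (h : IsI (x - y)) (hy : ¬ IsI y) : ¬ IsI x := by
  intro hx; apply hy
  have := hx.sub h
  simpa using this

section
variable {V : ℚ → ℚ}

lemma V_halfdiv (hV : IsV2 V) {n : ℕ} {x y : ℚ} (hxy : IsI (x - y)) (hy : ¬ IsI y)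
    (hFy : IsI (Fm n * y)) : V x = 1 / 2 := by
  apply V_half hV (m := 2 ^ n) (by positivity) _ (not_I_congr hxy hy)
  rw [← Fm_cast]
  have := hFy.add ((IsI.nat (Fm n)).mul hxy)
  convert this using 1; ring

lemma I_Fm_div (n : ℕ) {u : ℚ} (hu : IsI u) : IsI (Fm n * (u / Fm n)) := by
  have hF' : (Fm n : ℚ) ≠ 0 := by have := Fm_pos n; positivity
  rwa [mul_div_cancel₀ _ hF']

variable {ι : Type} [DecidableEq ι]

lemma Rlem (hV : IsV2 V) (a v : ι → ℕ) (hd : ∀ i, 2 ^ v i ∣ a i)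
    (hF : ∀ i, Fm (v i) ∣ 2 ^ a i + 1)
    (hc : ∀ i j, i ≠ j → IsCoprime ((2 : ℤ) ^ a i + 1) (Fm (v j) : ℤ))
    (hinj : Function.Injective v) (A : Finset ι) : 2 ≤ A.card →
    ∃ y, (∀ n, (∀ i ∈ A, v i < n) → Per (2 ^ n) y) ∧ FA V a A y < -(1 / 2) := by
  induction A using Finset.induction_on_max_value v with
  | empty => intro h; simp at h
  | insert m s hm hmax ih =>
    intro hcard
    rw [Finset.card_insert_of_notMem hm] at hcard
    have hlt : ∀ i ∈ s, v i < v m := fun i hi =>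
      lt_of_le_of_ne (hmax i hi) (fun h => hm (hinj h ▸ hi))
    rcases Nat.lt_or_ge s.card 2 with h1 | h1
    · have h1' : s.card = 1 := by omega
      obtain ⟨l, rfl⟩ := Finset.card_eq_one.mp h1'
      have hlm : v l < v m := hlt l (by simp)
      have hne : l ≠ m := fun h => by rw [h] at hlm; omega
      have hFl : (Fm (v l) : ℚ) ≠ 0 := by have := Fm_pos (v l); positivity
      have hFm : (Fm (v m) : ℚ) ≠ 0 := by have := Fm_pos (v m); positivity
      obtain ⟨wl, hwl⟩ := hF l
      obtain ⟨wm, hwm⟩ := hF m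
      have hwl' : (2 : ℚ) ^ a l + 1 = Fm (v l) * wl := by exact_mod_cast hwl
      have hwm' : (2 : ℚ) ^ a m + 1 = Fm (v m) * wm := by exact_mod_cast hwm
      have hcl : IsCoprime (wl : ℤ) (Fm (v m) : ℤ) :=
        (hc l m hne).of_isCoprime_of_dvd_left ⟨Fm (v l), by rw [mul_comm]; exact_mod_cast hwl⟩
      have hcm : IsCoprime (wm : ℤ) (Fm (v l) : ℤ) :=
        (hc m l hne.symm).of_isCoprime_of_dvd_left ⟨Fm (v m), by rw [mul_comm]; exact_mod_cast hwm⟩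
      refine ⟨1 / (Fm (v l) * Fm (v m)), ?_, ?_⟩
      · intro n hn
        have h2 : v m < n := hn m (by simp)
        have e : (Fm (v m) : ℚ) = 2 ^ 2 ^ v m + 1 := Fm_cast _
        apply perMono (show v m + 1 ≤ n by omega)
        have h3 := perF hlm
        unfold Per at h3 ⊢
        convert h3 using 1
        rw [pow_succ, pow_mul, show ((2 : ℚ) ^ 2 ^ v m) ^ 2 - 1 = (2 ^ 2 ^ v m - 1) * Fm (v m) by rw [e]; ring]
        field_simp
      · have q := quarter hV hlm
        rw [show ({l} : Finset ι) = insert l ∅ by simp] at hm ⊢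
        rw [FA_insert a hm, FA_insert a (by simp), FA_insert a (by simp)]
        simp only [FA_empty]
        have e1 : V ((2 ^ a l + 1) * ((2 ^ a m + 1) * (1 / (Fm (v l) * Fm (v m))))) = 0 := by
          apply V_int hV
          have := (IsI.nat wl).mul (IsI.nat wm)
          convert this using 1
          rw [hwl', hwm']; field_simp
        have e2 : V ((2 ^ a m + 1) * (1 / (Fm (v l) * Fm (v m)))) = 1 / 2 := by
          apply V_halfdiv hV (n := v l) (y := ((wm : ℤ) : ℚ) / Fm (v l)) _
            (not_I_div (Fm_gt _) hcm) (I_Fm_div _ (IsI.int _))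
          refine ⟨0, ?_⟩
          rw [hwm']; push_cast; field_simp; simp
        have e3 : V ((2 ^ a l + 1) * (1 / (Fm (v l) * Fm (v m)))) = 1 / 2 := by
          apply V_halfdiv hV (n := v m) (y := ((wl : ℤ) : ℚ) / Fm (v m)) _
            (not_I_div (Fm_gt _) hcl) (I_Fm_div _ (IsI.int _))
          refine ⟨0, ?_⟩
          rw [hwl']; push_cast; field_simp; simp
        rw [e1, e2, e3]; linarith
    · obtain ⟨y, hy, hlty⟩ := ih h1
      have hyp := hy (v m) hlt
      have hne : s.Nonempty := Finset.card_pos.mp (by omega)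
      have hs := stepSum a hV hne (v m) hm (hd m) (hF m)
        (fun i hi => hc i m (fun h => hm (h ▸ hi))) y hyp
      obtain ⟨c, -, hcc⟩ := exists_of_sum (n := v m) _ (by
        rw [hs]; exact mul_lt_mul_of_pos_left hlty (by positivity))
      refine ⟨_, ?_, hcc⟩
      intro n hn
      have h2 : v m < n := hn m (by simp)
      apply (perMono h2.le hyp).add
      have := (perF h2).mulI (IsI.nat (c + 1))
      convert this using 1; push_cast; ring

lemma case3 (hV : IsV2 V) (a v : ι → ℕ) 
    (hF : ∀ i, Fm (v i) ∣ 2 ^ a i + 1)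
    (hc : ∀ i j, i ≠ j → IsCoprime ((2 : ℤ) ^ a i + 1) (Fm (v j) : ℤ))
    (l m h : ι) (hlm : v l < v m) (hmh : v m < v h) :
    ∃ x, Per (2 ^ (v h + 1)) x ∧
      FA V a (insert h (insert m {l})) x + V (-((2 ^ a h + 1) * x)) - V (-x) < -(1 / 2) := by
  have nlm : l ≠ m := fun e => by rw [e] at hlm; omega
  have nmh : m ≠ h := fun e => by rw [e] at hmh; omega
  have nlh : l ≠ h := fun e => by rw [e] at hlm; omega
  have hFl : (Fm (v l) : ℚ) ≠ 0 := by have := Fm_pos (v l); positivity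
  have hFm : (Fm (v m) : ℚ) ≠ 0 := by have := Fm_pos (v m); positivity
  have hFh : (Fm (v h) : ℚ) ≠ 0 := by have := Fm_pos (v h); positivity
  obtain ⟨wl, hwl⟩ := hF l
  obtain ⟨wm, hwm⟩ := hF m
  obtain ⟨wh, hwh⟩ := hF h
  have hwl' : (2 : ℚ) ^ a l + 1 = Fm (v l) * wl := by exact_mod_cast hwl
  have hwm' : (2 : ℚ) ^ a m + 1 = Fm (v m) * wm := by exact_mod_cast hwm
  have hwh' : (2 : ℚ) ^ a h + 1 = Fm (v h) * wh := by exact_mod_cast hwh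
  have clh : IsCoprime (wl : ℤ) (Fm (v h) : ℤ) :=
    (hc l h nlh).of_isCoprime_of_dvd_left ⟨Fm (v l), by rw [mul_comm]; exact_mod_cast hwl⟩
  have chl : IsCoprime (wh : ℤ) (Fm (v l) : ℤ) :=
    (hc h l nlh.symm).of_isCoprime_of_dvd_left ⟨Fm (v h), by rw [mul_comm]; exact_mod_cast hwh⟩
  have cmh : IsCoprime (Fm (v m) : ℤ) (Fm (v h) : ℤ) :=
    (hc m h nmh).of_isCoprime_of_dvd_left ⟨wm, by exact_mod_cast hwm⟩
  obtain ⟨p, r, hpr⟩ := (hc m l nlm.symm).mul_right (hc m h nmh)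
  have hpr' : (p : ℚ) * (2 ^ a m + 1) + r * (Fm (v l) * Fm (v h)) = 1 := by exact_mod_cast hpr
  have cph : IsCoprime p (Fm (v h) : ℤ) :=
    ⟨2 ^ a m + 1, r * Fm (v l), by linear_combination hpr⟩
  set w : ℚ := p / (Fm (v l) * Fm (v h)) with hw
  have hNw : (2 ^ a m + 1) * w = 1 / (Fm (v l) * Fm (v h)) - r := by
    rw [hw]; field_simp; linarith
  have hlh : v l < v h := hlm.trans hmh
  have hk : 0 < 2 ^ (v h + 1) := by positivity
  have hPw : Per (2 ^ (v h + 1)) w := by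
    have h3 := (perF hlh).mulI (IsI.int p)
    unfold Per at h3 ⊢
    convert h3 using 1
    have e : (Fm (v h) : ℚ) = 2 ^ 2 ^ v h + 1 := Fm_cast _
    rw [hw, pow_succ, pow_mul, show ((2 : ℚ) ^ 2 ^ v h) ^ 2 - 1 = (2 ^ 2 ^ v h - 1) * Fm (v h) by rw [e]; ring]
    field_simp
  have hPm : Per (2 ^ (v h + 1)) (1 / (Fm (v m) : ℚ)) := perF (by omega)
  have hPx : ∀ c : ℕ, Per (2 ^ (v h + 1)) (w + (c + 1) / Fm (v m)) := by
    intro c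
    apply hPw.add
    have := hPm.mulI (IsI.nat (c + 1))
    convert this using 1; push_cast; ring
  have hIl : IsI ((2 : ℚ) ^ a l + 1) := (IsI.pow2 _).add IsI.one
  have hIm : IsI ((2 : ℚ) ^ a m + 1) := (IsI.pow2 _).add IsI.one
  have hIh : IsI ((2 : ℚ) ^ a h + 1) := (IsI.pow2 _).add IsI.one
  have q := quarter hV hlh
  have hPq : Per (2 ^ (v h + 1)) (1 / (Fm (v l) * Fm (v h) : ℚ)) := by
    have := (hPw.mulI hIm).add (Per.ofI (IsI.int r))
    rw [hNw] at this
    convert this using 1; ring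
  have main : ∀ c ∈ Finset.range (2 ^ 2 ^ v m),
      FA V a (insert h (insert m {l})) (w + (c + 1) / Fm (v m))
        + V (-((2 ^ a h + 1) * (w + (c + 1) / Fm (v m)))) - V (-(w + (c + 1) / Fm (v m)))
      = V ((2 ^ a l + 1) * w + ((2 ^ a l + 1 : ℤ) : ℚ) * (c + 1) / Fm (v m)) +
        (V (1 / (Fm (v l) * Fm (v h))) - 3 / 2) := by
    intro c hcr
    rw [Finset.mem_range] at hcr
    set x := w + ((c : ℚ) + 1) / Fm (v m) with hx
    have hmx : (2 ^ a m + 1) * x = 1 / (Fm (v l) * Fm (v h)) + (wm * (c + 1) - r) := by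
      rw [hx, mul_add, hNw, hwm']; field_simp; ring
    have hIw : IsI ((wm : ℚ) * (c + 1) - r) := by
      have := ((IsI.nat wm).mul (IsI.nat (c + 1))).sub (IsI.int r)
      push_cast at this; exact this
    rw [show ({l} : Finset ι) = insert l ∅ by simp,
      FA_insert a (by simp [nmh.symm, nlh.symm]), FA_insert a (by simp [nlm.symm]),
      FA_insert a (by simp), FA_insert a (by simp), FA_insert a (by simp [nlm.symm]),
      FA_insert a (by simp), FA_insert a (by simp)]
    simp only [FA_empty]
    have e1 : V ((2 ^ a l + 1) * ((2 ^ a m + 1) * ((2 ^ a h + 1) * x))) = 0 := by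
      apply V_int hV
      have := ((IsI.nat wl).mul (IsI.nat wh)).add ((hIl.mul hIh).mul hIw)
      convert this using 1
      rw [show (2 ^ a l + 1) * (((2 : ℚ) ^ a m + 1) * ((2 ^ a h + 1) * x)) =
        (2 ^ a l + 1) * (2 ^ a h + 1) * ((2 ^ a m + 1) * x) by ring, hmx, mul_add]
      congr 1
      rw [hwl', hwh']; field_simp
    have e2 : V ((2 ^ a m + 1) * ((2 ^ a h + 1) * x)) = 1 / 2 := by
      apply V_halfdiv hV (n := v l) (y := ((wh : ℤ) : ℚ) / Fm (v l)) _
        (not_I_div (Fm_gt _) chl) (I_Fm_div _ (IsI.int _))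
      have := hIh.mul hIw
      convert this using 1
      rw [show (((2 : ℚ) ^ a m + 1) * ((2 ^ a h + 1) * x)) =
        (2 ^ a h + 1) * ((2 ^ a m + 1) * x) by ring, hmx, mul_add]
      have : (2 ^ a h + 1) * (1 / (Fm (v l) * Fm (v h)) : ℚ) = ((wh : ℤ) : ℚ) / Fm (v l) := by
        rw [hwh']; push_cast; field_simp
      rw [this]; ring
    have e5 : V ((2 ^ a l + 1) * ((2 ^ a m + 1) * x)) = 1 / 2 := by
      apply V_halfdiv hV (n := v h) (y := ((wl : ℤ) : ℚ) / Fm (v h)) _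
        (not_I_div (Fm_gt _) clh) (I_Fm_div _ (IsI.int _))
      have := hIl.mul hIw
      convert this using 1
      rw [hmx, mul_add]
      have : (2 ^ a l + 1) * (1 / (Fm (v l) * Fm (v h)) : ℚ) = ((wl : ℤ) : ℚ) / Fm (v h) := by
        rw [hwl']; push_cast; field_simp
      rw [this]; ring
    have clhm : IsCoprime (((2 : ℤ) ^ a l + 1) * (2 ^ a h + 1)) (Fm (v m) : ℤ) :=
      (hc l m nlm).mul_left (hc h m nmh.symm)
    have n3 := not_I_div' clhm hcr
    have i3 : IsI ((2 ^ a l + 1) * ((2 ^ a h + 1) * x) -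
        ((((2 : ℤ) ^ a l + 1) * (2 ^ a h + 1) : ℤ) : ℚ) * (c + 1) / Fm (v m)) := by
      have := ((IsI.nat wl).mul (IsI.nat wh)).mul (IsI.int p)
      convert this using 1
      have e : (2 ^ a l + 1) * ((2 ^ a h + 1) * w) = (wl : ℚ) * wh * p := by
        rw [hwl', hwh', hw]; field_simp
      rw [← e, hx]; push_cast; ring
    have e3 : V ((2 ^ a l + 1) * ((2 ^ a h + 1) * x)) = 1 / 2 := by
      apply V_halfdiv hV (n := v m) i3 n3 (I_Fm_div _ _)
      exact (IsI.int _).mul ⟨c + 1, by push_cast; rfl⟩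
    have nhx : ¬ IsI ((2 ^ a h + 1) * x) := fun hh => not_I_congr i3 n3 (hIl.mul hh)
    have nx : ¬ IsI x := fun hh => nhx (hIh.mul hh)
    have e4 := V_neg hV hk ((hPx c).mulI hIh) nhx
    have e7 := V_neg hV hk (hPx c) nx
    have e6 : V ((2 ^ a m + 1) * x) = V (1 / (Fm (v l) * Fm (v h))) := by
      apply V_congr hV hk hPq
      rw [hmx]; convert hIw using 1; ring
    have e8 : (2 ^ a l + 1) * w + ((2 ^ a l + 1 : ℤ) : ℚ) * (c + 1) / Fm (v m) = (2 ^ a l + 1) * x := by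
      rw [hx]; push_cast; ring
    rw [e8, e1, e2, e3, e4, e5, e6, e7]; ring
  have hz1 : V ((2 ^ a l + 1) * w) = 1 / 2 := by
    apply V_halfdiv hV (n := v h) (y := ((wl * p : ℤ) : ℚ) / Fm (v h)) _
      (not_I_div (Fm_gt _) (clh.mul_left cph)) (I_Fm_div _ (IsI.int _))
    refine ⟨0, ?_⟩
    rw [hwl', hw]; push_cast; field_simp; simp
  have hz2 : V (Fm (v m) * ((2 ^ a l + 1) * w)) = 1 / 2 := by
    apply V_halfdiv hV (n := v h) (y := ((Fm (v m) * (wl * p) : ℤ) : ℚ) / Fm (v h)) _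
      (not_I_div (Fm_gt _) (cmh.mul_left (clh.mul_left cph))) (I_Fm_div _ (IsI.int _))
    refine ⟨0, ?_⟩
    rw [hwl', hw]; push_cast; field_simp; simp
  have hav := avg hV hk (v m) (2 ^ a l + 1) (hc l m nlm) ((2 ^ a l + 1) * w) (hPw.mulI hIl) hPm
    (by rw [hz1, hz2])
  obtain ⟨c, -, hcc⟩ := exists_of_sum (n := v m) _ (by
    rw [Finset.sum_congr rfl main, Finset.sum_add_distrib, hav]
    simp only [Finset.sum_const, Finset.card_range, nsmul_eq_mul, Nat.cast_pow, Nat.cast_ofNat]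
    have : (0 : ℚ) < 2 ^ 2 ^ v m := by positivity
    nlinarith)
  exact ⟨_, hPx c, hcc⟩

end

lemma avgNeg {V : ℚ → ℚ} (hV : IsV2 V) (n : ℕ) (u : ℤ)
    (hu : IsCoprime u (Fm n : ℤ)) (z : ℚ) (hz : Per (2 ^ n) z) :
    ∑ c ∈ Finset.range (2 ^ 2 ^ n), V (-(u * (z + (c + 1) / Fm n))) = (2 : ℚ) ^ (2 ^ n) / 2 := by
  have := avgPer hV n (-u) hu.neg_left (-(u * z)) (hz.mulI (IsI.int u)).neg
  rw [← this]
  congr 1; ext c; congr 1; push_cast; ring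

/-- For `t ≥ 3`, positive integers `a₁ > a₂ > ⋯ > a_t` with `2^{a_j}+1` pairwise coprime,
and a positive integer `b` with `gcd(2^b+1, 2^{a₁}+1) = 1`, there is a rational `x`
with odd denominator such that `V(2; a₁, …, a_t; x) + V(-(2^b+1)x) - V(-x) < -1/2`. -/
theorem stmt_12 (V : ℚ → ℚ) (hV : IsV2 V) (t : ℕ) (ht : 3 ≤ t)
    (a : Fin t → ℕ) (hpos : ∀ j, 0 < a j) (hanti : StrictAnti a)
    (hcop : ∀ j k, j ≠ k → Nat.Coprime (2 ^ a j + 1) (2 ^ a k + 1))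
    (b : ℕ) (hb : 0 < b)
    (hbcop : Nat.Coprime (2 ^ b + 1) (2 ^ a ⟨0, by omega⟩ + 1)) :
    ∃ x : ℚ, Odd x.den ∧
      Vmulti V a x + V (-(((2 : ℚ) ^ b + 1) * x)) - V (-x) < -(1 / 2) := by
  have hVm : ∀ x, Vmulti V a x = FA V a Finset.univ x := by
    intro x; simp [Vmulti, FA]
  have hex : ∀ n : ℕ, 0 < n → ∃ k m : ℕ, Odd m ∧ n = 2 ^ k * m :=
    fun n hn => Nat.exists_eq_two_pow_mul_odd hn.ne'
  choose v m hm hvm using fun j => hex (a j) (hpos j)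
  obtain ⟨vb, mb, hmb, hvb⟩ := hex b hb
  have hd : ∀ i, 2 ^ v i ∣ a i := fun i => ⟨m i, hvm i⟩
  have hF : ∀ i, Fm (v i) ∣ 2 ^ a i + 1 := fun i => by rw [hvm i]; exact Fm_dvd (hm i)
  have hinj : Function.Injective v := by
    intro i j hij
    by_contra hne
    have h1 := Nat.dvd_gcd (hF i) (hij ▸ hF j)
    rw [hcop i j hne] at h1
    have := Nat.le_of_dvd one_pos h1
    have := Fm_gt (v i)
    omega
  have hc : ∀ i j, i ≠ j → IsCoprime ((2 : ℤ) ^ a i + 1) (Fm (v j) : ℤ) := by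
    intro i j hij
    rw [hvm i]
    exact Fm_cop (hm i) (fun h => hij (hinj h))
  have hne : (Finset.univ : Finset (Fin t)).Nonempty := ⟨⟨0, by omega⟩, Finset.mem_univ _⟩
  obtain ⟨τ, -, hτ⟩ := Finset.exists_max_image Finset.univ v hne
  obtain ⟨A, hAdef⟩ : ∃ A : Finset (Fin t), A = Finset.univ.erase τ := ⟨_, rfl⟩
  have hτA : τ ∉ A := by rw [hAdef]; exact Finset.notMem_erase _ _
  have huniv : (Finset.univ : Finset (Fin t)) = insert τ A := by
    rw [hAdef, Finset.insert_erase (Finset.mem_univ _)]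
  have hAcard : A.card = t - 1 := by
    rw [hAdef, Finset.card_erase_of_mem (Finset.mem_univ _)]; simp
  have hAlt : ∀ i ∈ A, v i < v τ := fun i hi =>
    lt_of_le_of_ne (hτ i (Finset.mem_univ _)) (fun h => hτA (hinj h ▸ hi))
  have hAne : A.Nonempty := Finset.card_pos.mp (by omega)
  have hcA : ∀ i ∈ A, IsCoprime ((2 : ℤ) ^ a i + 1) (Fm (v τ) : ℤ) :=
    fun i hi => hc i τ (fun h => hτA (h ▸ hi))
  have hPx : ∀ (n : ℕ) (y : ℚ) (c : ℕ), Per (2 ^ n) y → Per (2 ^ (n + 1)) (y + (c + 1) / Fm n) := by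
    intro n y c hy
    apply (perMono (by omega) hy).add
    have := (perF_self n).mulI (IsI.nat (c + 1))
    convert this using 1; push_cast; ring
  have hone : ∀ (n : ℕ) (z : ℚ), Per (2 ^ n) z →
      ∑ c ∈ Finset.range (2 ^ 2 ^ n), V (-(z + (c + 1) / Fm n)) = (2 : ℚ) ^ (2 ^ n) / 2 := by
    intro n z hz
    have := avgNeg hV n 1 isCoprime_one_left z hz
    simpa using this
  by_cases hbt : vb = v τ
  · have hbV : ∀ x, Per (2 ^ (v τ + 1)) x → V (-((2 ^ b + 1) * x)) = V (-((2 ^ a τ + 1) * x)) := by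
      intro x hx
      apply V_congr hV (k := 2 ^ (v τ + 1)) (by positivity)
        (hx.mulI ((IsI.pow2 _).add IsI.one)).neg
      obtain ⟨s, hs⟩ := hmb
      obtain ⟨s', hs'⟩ := hm τ
      have h1 : Per (2 ^ (v τ + 1) * s) x := hx.dvd (dvd_mul_right _ _)
      have h2 : Per (2 ^ (v τ + 1) * s') x := hx.dvd (dvd_mul_right _ _)
      have h3 := (IsI.pow2 (2 ^ v τ)).mul (h2.sub h1)
      have eb : b = 2 ^ v τ + 2 ^ (v τ + 1) * s := by rw [hvb, hbt, hs, pow_succ]; ring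
      have ea : a τ = 2 ^ v τ + 2 ^ (v τ + 1) * s' := by rw [hvm τ, hs', pow_succ]; ring
      convert h3 using 1
      rw [ea, eb, pow_add, pow_add]; ring
    obtain ⟨σ, hσA, hσ⟩ := Finset.exists_max_image A v hAne
    obtain ⟨B, hBdef⟩ : ∃ B : Finset (Fin t), B = A.erase σ := ⟨_, rfl⟩
    have hσB : σ ∉ B := by rw [hBdef]; exact Finset.notMem_erase _ _
    have hAB : A = insert σ B := by rw [hBdef, Finset.insert_erase hσA]
    have hBcard : B.card = t - 2 := by
      rw [hBdef, Finset.card_erase_of_mem hσA]; omega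
    have hBlt : ∀ i ∈ B, v i < v σ := fun i hi =>
      lt_of_le_of_ne (hσ i (by rw [hAB]; exact Finset.mem_insert_of_mem hi)) (fun h => hσB (hinj h ▸ hi))
    have hστ := hAlt σ hσA
    rcases Nat.lt_or_ge B.card 2 with h1 | h1
    · obtain ⟨l, hl⟩ := Finset.card_eq_one.mp (show B.card = 1 by omega)
      obtain ⟨x, hx, hlt⟩ := case3 hV a v hF hc l σ τ (hBlt l (by rw [hl]; simp)) hστ
      refine ⟨x, hx.oddden (by positivity), ?_⟩
      rw [hVm, huniv, hAB, hl, hbV x hx]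
      exact hlt
    · obtain ⟨z, hz, hzlt⟩ := Rlem hV a v hd hF hc hinj B h1
      have hBne : B.Nonempty := Finset.card_pos.mp (by omega)
      have hzp := hz (v σ) hBlt
      have hs := stepSum a hV hBne (v σ) hσB (hd σ) (hF σ)
        (fun i hi => hc i σ (fun h => hσB (h ▸ hi))) z hzp
      obtain ⟨c, -, hcc⟩ := exists_of_sum (n := v σ)
        (fun c => FA V a (insert σ B) (z + (c + 1) / Fm (v σ)) + V (-(z + (c + 1) / Fm (v σ))) - 1 / 2) (by
          rw [Finset.sum_sub_distrib, Finset.sum_add_distrib, hs, hone _ _ hzp]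
          simp only [Finset.sum_const, Finset.card_range, nsmul_eq_mul, Nat.cast_pow, Nat.cast_ofNat]
          have : (0 : ℚ) < 2 ^ 2 ^ v σ := by positivity
          nlinarith)
      rw [← hAB] at hcc
      have hyp : Per (2 ^ v τ) (z + (c + 1) / Fm (v σ)) := perMono hστ (hPx _ _ c hzp)
      generalize z + ((c : ℚ) + 1) / Fm (v σ) = y at hcc hyp
      have hs2 := stepSum a hV hAne (v τ) hτA (hd τ) (hF τ) hcA y hyp
      have hb2 : ∀ c ∈ Finset.range (2 ^ 2 ^ v τ), V (-((2 ^ b + 1) * (y + (c + 1) / Fm (v τ)))) = V (-y) := by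
        intro c _
        rw [hbV _ (hPx _ _ c hyp), ← V_two hV (k := 2 ^ v τ) (by positivity) hyp.neg]
        apply V_congr hV (k := 2 ^ v τ) (by positivity) hyp.neg.mulpow
        have := (kill (hd τ) (hF τ) hyp c).neg
        convert this using 1; ring
      obtain ⟨c, -, hcc2⟩ := exists_of_sum (n := v τ)
        (fun c => FA V a (insert τ A) (y + (c + 1) / Fm (v τ)) +
          V (-((2 ^ b + 1) * (y + (c + 1) / Fm (v τ)))) - V (-(y + (c + 1) / Fm (v τ)))) (by
          rw [Finset.sum_sub_distrib, Finset.sum_add_distrib, hs2, hone _ _ hyp,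
            Finset.sum_congr rfl hb2]
          simp only [Finset.sum_const, Finset.card_range, nsmul_eq_mul, Nat.cast_pow, Nat.cast_ofNat]
          have : (0 : ℚ) < 2 ^ 2 ^ v τ := by positivity
          nlinarith)
      refine ⟨_, (hPx _ _ c hyp).oddden (by positivity), ?_⟩
      rw [hVm, huniv]
      exact hcc2
  · obtain ⟨y, hy, hylt⟩ := Rlem hV a v hd hF hc hinj A (by omega)
    have hyp := hy (v τ) hAlt
    have hs := stepSum a hV hAne (v τ) hτA (hd τ) (hF τ) hcA y hyp
    have hbc : IsCoprime ((2 : ℤ) ^ b + 1) (Fm (v τ) : ℤ) := by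
      rw [hvb]; exact Fm_cop hmb hbt
    have hbs := avgNeg hV (v τ) _ hbc y hyp
    push_cast at hbs
    obtain ⟨c, -, hcc2⟩ := exists_of_sum (n := v τ)
      (fun c => FA V a (insert τ A) (y + (c + 1) / Fm (v τ)) +
        V (-((2 ^ b + 1) * (y + (c + 1) / Fm (v τ)))) - V (-(y + (c + 1) / Fm (v τ)))) (by
        rw [Finset.sum_sub_distrib, Finset.sum_add_distrib, hs, hone _ _ hyp, hbs]
        have : (0 : ℚ) < 2 ^ 2 ^ v τ := by positivity
        nlinarith)
    refine ⟨_, (hPx _ _ c hyp).oddden (by positivity), ?_⟩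
    rw [hVm, huniv]
    exact hcc2
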